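/- Let μ be a Borel probability measure on ℝ with μ((−∞,0)) = 0, let α ∈ (0,1), K > 0, and let g : ℝ → ℝ be nonnegative, quasiconvex, and attain its minimum at a point r ∈ ℝ (g(r) = inf g). Let vₜ, Gₜ : ℝ → ℝ (t ∈ ℕ) satisfy: v₀ ≡ 0; for every t and every x the function d ↦ vₜ(x − d) is μ-integrable; Gₜ(x) = g(x) + α ∫ vₜ(x − d) dμ(d); and v_{t+1}(x) = min{ K + inf_{y ≥ x} Gₜ(y), Gₜ(x) }. Then for every t ∈ ℕ and all x ≤ y ≤ r: Gₜ(y) ≤ Gₜ(x) and vₜ(y) ≤ vₜ(x). -/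

import Mathlib

/-!
The monotonicity on `(-∞, r]` propagates through the recursion by induction on `t`. If `v t` is
nonincreasing there, then so is `x ↦ ∫ v t (x - d) dμ(d)`, because demand is almost surely
nonnegative and so `x - d` stays below `r`; adding `g`, which is nonincreasing left of its
minimizer by quasiconvexity, gives the claim for `G t`. If `G t` is nonincreasing there, then
raising `x` to `y ≤ r` removes from the infimum over `[x, ∞)` only points of `[x, y)`, where `G t` is
at least `G t y`; so this infimum does not increase (`iInf_Ici_anti`), and neither does `v (t + 1)`.
Nonnegativity of `v t` is needed so that the infima are over sets bounded below.
-/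

open MeasureTheory Filter Set

/-- A quasiconvex function is nonincreasing to the left of a minimizer. -/
lemma anti_left_of_minimizer {g : ℝ → ℝ}
    (hgqc : ∀ x y lam : ℝ, 0 ≤ lam → lam ≤ 1 →
      g (lam * x + (1 - lam) * y) ≤ max (g x) (g y))
    {r : ℝ} (hr : ∀ x, g r ≤ g x) {x y : ℝ} (hxy : x ≤ y) (hyr : y ≤ r) : g y ≤ g x := by
  rcases hyr.eq_or_lt with rfl | hlt
  · exact hr x
  have hpos : 0 < r - x := by linarith
  have h := hgqc x r ((r - y) / (r - x)) (div_nonneg (by linarith) hpos.le)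
    ((div_le_one hpos).2 (by linarith))
  have e : (r - y) / (r - x) * x + (1 - (r - y) / (r - x)) * r = y := by
    field_simp
    ring
  rwa [e, max_eq_left (hr x)] at h

/-- Shrinking `[x, ∞)` to `[y, ∞)` does not raise the infimum: each discarded point can be replaced
by `y`. Nonnegativity keeps the real-valued infima meaningful. -/
lemma iInf_Ici_anti {G : ℝ → ℝ} (hG0 : ∀ z, 0 ≤ G z) {x y : ℝ}
    (hG : ∀ z, x ≤ z → z ≤ y → G y ≤ G z) :
    ⨅ z : Set.Ici y, G (z : ℝ) ≤ ⨅ z : Set.Ici x, G (z : ℝ) := by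
  have hbdd : BddBelow (Set.range fun z : Set.Ici y => G (z : ℝ)) :=
    ⟨0, by rintro _ ⟨z, rfl⟩; exact hG0 z⟩
  refine le_ciInf fun z => ?_
  rcases le_total y (z : ℝ) with h | h
  · exact ciInf_le hbdd ⟨(z : ℝ), h⟩
  · exact (ciInf_le hbdd ⟨y, Set.self_mem_Ici⟩).trans (hG z z.2 h)

/-- Lemma 3.2: under the quasiconvexity assumption, the finite-horizon
functions `Gₜ` and `vₜ` of the transformed inventory model are nonincreasing
on `(-∞, r]`, where `r` is a minimizer of `g`. -/
theorem stmt7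
    (μ : Measure ℝ) [IsProbabilityMeasure μ]
    (hμ0 : μ (Set.Iio 0) = 0)
    (α K : ℝ) (hα : α ∈ Set.Ioo (0 : ℝ) 1) (hK : 0 < K)
    (g : ℝ → ℝ) (hgnn : ∀ x, 0 ≤ g x)
    (hgqc : ∀ x y lam : ℝ, 0 ≤ lam → lam ≤ 1 →
      g (lam * x + (1 - lam) * y) ≤ max (g x) (g y))
    (r : ℝ) (hr : ∀ x, g r ≤ g x)
    (v G : ℕ → ℝ → ℝ)
    (hv0 : ∀ x, v 0 x = 0)
    (hint : ∀ t x, Integrable (fun d => v t (x - d)) μ)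
    (hGdef : ∀ t x, G t x = g x + α * ∫ d, v t (x - d) ∂μ)
    (hrec : ∀ t x, v (t + 1) x = min (K + ⨅ y : Set.Ici x, G t (y : ℝ)) (G t x)) :
    ∀ t : ℕ, ∀ x y : ℝ, x ≤ y → y ≤ r → G t y ≤ G t x ∧ v t y ≤ v t x := by
  have hG_nonneg : ∀ t, (∀ x, 0 ≤ v t x) → ∀ x, 0 ≤ G t x := fun t hv x => by
    rw [hGdef]
    exact add_nonneg (hgnn x) (mul_nonneg hα.1.le (integral_nonneg fun d => hv (x - d)))
  have hv_nonneg : ∀ t x, 0 ≤ v t x := by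
    intro t
    induction t with
    | zero => exact fun x => (hv0 x).ge
    | succ t ih =>
      intro x
      rw [hrec]
      exact le_min (add_nonneg hK.le (Real.iInf_nonneg fun y => hG_nonneg t ih y))
        (hG_nonneg t ih x)
  have hd : ∀ᵐ d ∂μ, 0 ≤ d := by
    rw [ae_iff]
    simp only [not_le]
    exact hμ0
  have hG_anti : ∀ t, (∀ x y, x ≤ y → y ≤ r → v t y ≤ v t x) →
      ∀ x y, x ≤ y → y ≤ r → G t y ≤ G t x := by
    intro t hv x y hxy hyr
    rw [hGdef, hGdef]
    refine add_le_add (anti_left_of_minimizer hgqc hr hxy hyr)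
      (mul_le_mul_of_nonneg_left (integral_mono_ae (hint t y) (hint t x) ?_) hα.1.le)
    filter_upwards [hd] with d hd
    exact hv _ _ (by linarith) (by linarith)
  have hv_anti : ∀ t, ∀ x y, x ≤ y → y ≤ r → v t y ≤ v t x := by
    intro t
    induction t with
    | zero => intro x y _ _; rw [hv0, hv0]
    | succ t ih =>
      intro x y hxy hyr
      rw [hrec, hrec]
      refine min_le_min (add_le_add le_rfl (iInf_Ici_anti (hG_nonneg t (hv_nonneg t)) ?_))
        (hG_anti t ih x y hxy hyr)
      exact fun z _ hzy => hG_anti t ih z y hzy hyr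
  exact fun t x y hxy hyr => ⟨hG_anti t (hv_anti t) x y hxy hyr, hv_anti t x y hxy hyr⟩
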